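/- Assume H is 2q-observable and 2q ≤ m. Then for every δ > 0, u(δ) ≤ ū(δ), i.e., inf_{y ∈ ℝ^m} sup{ d_x(y) : x ∈ 𝕏(y,δ) } ≤ inf{ (1/2)·Σ_{i=1}^m (H_i x + s_i)²/W_i : x ∈ ℝ^n with ‖x‖₂ = δ, s ∈ ℝ^m with at most 2q nonzero entries }. -/

import Mathlib

/-- The inconsistency `d_x(y)`. -/
noncomputable def dinc (m n q : ℕ) (H : Matrix (Fin m) (Fin n) ℝ) (W : Fin m → ℝ)
    (x : EuclideanSpace ℝ (Fin n)) (y : Fin m → ℝ) : ℝ :=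
  sInf { v : ℝ | ∃ a : Fin m → ℝ, (Function.support a).ncard ≤ q ∧
    v = (1 / 2 : ℝ) * ∑ i, (y i - (∑ j, H i j * x j) + a i) ^ 2 / W i }

/-- The sublevel set `X(y,φ) := {x : d_x(y) ≤ φ}`. -/
noncomputable def sublevel (m n q : ℕ) (H : Matrix (Fin m) (Fin n) ℝ) (W : Fin m → ℝ)
    (y : Fin m → ℝ) (φ : ℝ) : Set (EuclideanSpace ℝ (Fin n)) :=
  { x | dinc m n q H W x y ≤ φ }

/-- The radius `rad(A) := inf_c sup_{x ∈ A} ‖x − c‖₂` (with `rad ∅ = 0`). -/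
noncomputable def rad (n : ℕ) (A : Set (EuclideanSpace ℝ (Fin n))) : ℝ :=
  ⨅ c : EuclideanSpace ℝ (Fin n), ⨆ x ∈ A, dist x c

/-- The set `𝕏(y,δ) := ⋃ { X(y,φ) : φ ≥ 0, rad(X(y,φ)) ≤ δ }`. -/
noncomputable def bigX (m n q : ℕ) (H : Matrix (Fin m) (Fin n) ℝ) (W : Fin m → ℝ)
    (y : Fin m → ℝ) (δ : ℝ) : Set (EuclideanSpace ℝ (Fin n)) :=
  ⋃ φ ∈ { φ : ℝ | 0 ≤ φ ∧ rad n (sublevel m n q H W y φ) ≤ δ },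
    sublevel m n q H W y φ

/-- `u(y,δ) := sup { d_x(y) : x ∈ 𝕏(y,δ) }` (sup over ∅ taken to be 0). -/
noncomputable def uQty (m n q : ℕ) (H : Matrix (Fin m) (Fin n) ℝ) (W : Fin m → ℝ)
    (y : Fin m → ℝ) (δ : ℝ) : ℝ :=
  sSup { v : ℝ | ∃ x ∈ bigX m n q H W y δ, v = dinc m n q H W x y }

/-- `u(δ) := inf_y u(y,δ)`. -/
noncomputable def uOpt (m n q : ℕ) (H : Matrix (Fin m) (Fin n) ℝ) (W : Fin m → ℝ)
    (δ : ℝ) : ℝ :=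
  ⨅ y : Fin m → ℝ, uQty m n q H W y δ

/-- `ū(δ) := inf { (1/2)Σ (H_i x + s_i)²/W_i : ‖x‖₂ = δ, s 2q-sparse }`. -/
noncomputable def uBar (m n q : ℕ) (H : Matrix (Fin m) (Fin n) ℝ) (W : Fin m → ℝ)
    (δ : ℝ) : ℝ :=
  sInf { v : ℝ | ∃ (x : EuclideanSpace ℝ (Fin n)) (s : Fin m → ℝ),
    ‖x‖ = δ ∧ (Function.support s).ncard ≤ 2 * q ∧
    v = (1 / 2 : ℝ) * ∑ i, ((∑ j, H i j * x j) + s i) ^ 2 / W i }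

/-- `H` is `2q`-observable. -/
def TwoQObservable (m n q : ℕ) (H : Matrix (Fin m) (Fin n) ℝ) : Prop :=
  2 * q ≤ m ∧ ∀ I : Finset (Fin m), I.card = m - 2 * q →
    (Matrix.of fun (i : { i // i ∈ I }) (j : Fin n) => H i.1 j).rank = n

/-!
Split a `2q`-sparse `s` as `a + b` with `a` and `b` both `q`-sparse. For the measurement
`y = b - a`, the attacks `-2b` and `2a` explain `x` and `-x` with residuals `-(H x + s)` and
`H x + s`, hence at the same cost. Every sublevel set of `x ↦ d_x(y)` above that cost therefore
contains both `x` and `-x`, so it has radius at least `‖x‖` and contributes nothing to `𝕏(y, δ)`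
when `‖x‖ > δ`. The boundary case `‖x‖ = δ` follows on replacing `(x, s)` by `(t x, t s)` and
letting `t` decrease to `1`.

Sublevel sets are bounded, so their radii are genuine suprema: once the at most `q` attacked
coordinates are discarded, the remaining rows of `H` still determine the state, and there are
finitely many choices of coordinates to discard.
-/

open Bornology Filter Function Matrix Topology

section SparseVectors

variable {ι M : Type*} [Finite ι]

theorem exists_add_eq_of_ncard_support_le [AddZeroClass M] {p q : ℕ} {s : ι → M}
    (hs : (support s).ncard ≤ p + q) :
    ∃ a b : ι → M, a + b = s ∧ (support a).ncard ≤ p ∧ (support b).ncard ≤ q := by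
  obtain ⟨S, hSs, hS⟩ := Set.exists_subset_card_eq (min_le_right p (support s).ncard)
  refine ⟨S.indicator s, Sᶜ.indicator s, Set.indicator_self_add_compl S s, ?_, ?_⟩
  · rw [Set.support_indicator, Set.inter_eq_left.2 hSs]
    omega
  · rw [Set.support_indicator, Set.inter_comm, ← Set.sdiff_eq, Set.ncard_sdiff hSs]
    omega

theorem ncard_support_const_smul_le {R : Type*} [Zero M] [SMulZeroClass R M] (c : R) (a : ι → M) :
    (support (c • a)).ncard ≤ (support a).ncard :=
  Set.ncard_le_ncard (support_const_smul_subset c a)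

end SparseVectors

section SparseObservability

theorem mulVec_injective_of_rank_eq_card {ι κ K : Type*} [Fintype κ] [Field K] {A : Matrix ι κ K}
    (hA : A.rank = Fintype.card κ) : Injective A.mulVec := by
  have rank_nullity := A.mulVecLin.finrank_range_add_finrank_ker
  rw [show Module.finrank K A.mulVecLin.range = _ from hA, Module.finrank_fintype_fun_eq_card,
    Nat.add_eq_left, Submodule.finrank_eq_zero] at rank_nullity
  exact LinearMap.ker_eq_bot.1 rank_nullity

/-- `H` is `k`-sparse observable when no nonzero state has a `k`-sparse image, so that `k` attacked
sensors cannot hide a state. For an `m`-rowed `H` with `k ≤ m` this amounts to every submatrix of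
`m - k` rows having full column rank; the kernel form avoids subtraction and is visibly antitone in
`k`. Finite row types are intended, since `ncard` is `0` on infinite supports. -/
def SparseObservable {ι κ R : Type*} [Fintype κ] [NonUnitalNonAssocSemiring R]
    (k : ℕ) (H : Matrix ι κ R) : Prop :=
  ∀ x : κ → R, (support (H *ᵥ x)).ncard ≤ k → x = 0

theorem SparseObservable.mono {ι κ R : Type*} [Fintype κ] [NonUnitalNonAssocSemiring R]
    {k l : ℕ} {H : Matrix ι κ R} (hH : SparseObservable l H) (hkl : k ≤ l) :
    SparseObservable k H :=
  fun x hx => hH x (hx.trans hkl)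

theorem TwoQObservable.sparseObservable {m n q : ℕ} {H : Matrix (Fin m) (Fin n) ℝ}
    (hH : TwoQObservable m n q H) : SparseObservable (2 * q) H := by
  classical
  intro x hx
  have enough_zeros : m - 2 * q ≤ (support (H *ᵥ x))ᶜ.toFinset.card := by
    have := Set.ncard_add_ncard_compl (support (H *ᵥ x))
    rw [← Set.ncard_eq_toFinset_card']
    rw [Nat.card_eq_fintype_card, Fintype.card_fin] at this
    omega
  obtain ⟨I, hI, hIcard⟩ := Finset.exists_subset_card_eq enough_zeros
  refine mulVec_injective_of_rank_eq_card ((hH.2 I hIcard).trans (Fintype.card_fin n).symm) ?_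
  rw [mulVec_zero]
  ext ⟨i, hi⟩
  simpa using! hI hi

variable {ι κ : Type*} [Finite ι] [Fintype κ] {k : ℕ} {H : Matrix ι κ ℝ}

theorem SparseObservable.injective_restrict_compl (hH : SparseObservable k H) {J : Set ι}
    (hJ : J.ncard ≤ k) :
    Injective (LinearMap.funLeft ℝ ℝ (Subtype.val : ↥Jᶜ → ι) ∘ₗ H.mulVecLin) := by
  refine (injective_iff_map_eq_zero _).2 fun x hx => hH x ((Set.ncard_le_ncard ?_).trans hJ)
  intro i hi
  by_contra hiJ
  exact hi (congrFun hx ⟨i, hiJ⟩)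

theorem SparseObservable.isBounded_setOf_exists_mulVec_add_mem (hH : SparseObservable k H)
    {B : Set (ι → ℝ)} (hB : IsBounded B) :
    IsBounded {x : κ → ℝ | ∃ a : ι → ℝ, (support a).ncard ≤ k ∧ H *ᵥ x + a ∈ B} := by
  classical
  have := Fintype.ofFinite ι
  let restrict (J : Set ι) := LinearMap.funLeft ℝ ℝ (Subtype.val : ↥Jᶜ → ι)
  have bounded_off (J : Set ι) (hJ : J.ncard ≤ k) :
      IsBounded ((restrict J ∘ₗ H.mulVecLin) ⁻¹' (restrict J '' B)) := by
    obtain ⟨K, -, hK⟩ :=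
      (LinearMap.injective_iff_antilipschitz _).1 (hH.injective_restrict_compl hJ)
    exact hK.isBounded_preimage (hB.image (restrict J).toContinuousLinearMap)
  refine ((isBounded_biUnion (Set.toFinite {J : Set ι | J.ncard ≤ k})).2 bounded_off).subset ?_
  rintro x ⟨a, ha, hxa⟩
  refine Set.mem_biUnion (x := support a) ha ⟨_, hxa, ?_⟩
  ext ⟨i, hi⟩
  simpa [restrict, LinearMap.funLeft] using hi

end SparseObservability

section WeightedCost

variable {ι : Type*} [Fintype ι] {W : ι → ℝ}

/-- The weighted least-squares cost of a residual `r`, common to the paper's `d_x(y)` and `ū(δ)`. -/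
noncomputable def weightedCost (W r : ι → ℝ) : ℝ :=
  (1 / 2 : ℝ) * ∑ i, r i ^ 2 / W i

theorem weightedCost_nonneg (hW : ∀ i, 0 < W i) (r : ι → ℝ) : 0 ≤ weightedCost W r :=
  mul_nonneg (by norm_num) (Finset.sum_nonneg fun i _ => div_nonneg (sq_nonneg _) (hW i).le)

theorem weightedCost_neg (r : ι → ℝ) : weightedCost W (-r) = weightedCost W r := by
  simp [weightedCost]

theorem weightedCost_smul (t : ℝ) (r : ι → ℝ) :
    weightedCost W (t • r) = t ^ 2 * weightedCost W r := by
  simp only [weightedCost, Pi.smul_apply, smul_eq_mul, mul_pow, mul_div_assoc, ← Finset.mul_sum]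
  ring

theorem abs_apply_le_sqrt_weightedCost (hW : ∀ i, 0 < W i) (r : ι → ℝ) (i : ι) :
    |r i| ≤ √(2 * weightedCost W r * W i) := by
  have term_le_sum : r i ^ 2 / W i ≤ ∑ j, r j ^ 2 / W j :=
    Finset.single_le_sum (f := fun j => r j ^ 2 / W j)
      (fun j _ => div_nonneg (sq_nonneg _) (hW j).le) (Finset.mem_univ i)
  refine Real.abs_le_sqrt ((div_le_iff₀ (hW i)).1 (term_le_sum.trans_eq ?_))
  rw [weightedCost]
  ring

theorem isBounded_setOf_weightedCost_le (hW : ∀ i, 0 < W i) (c : ℝ) :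
    IsBounded {r | weightedCost W r ≤ c} := by
  refine (Metric.isBounded_Icc (fun i => -√(2 * c * W i)) fun i => √(2 * c * W i)).subset ?_
  intro r (hr : weightedCost W r ≤ c)
  have abs_le_sqrt (i : ι) : |r i| ≤ √(2 * c * W i) :=
    (abs_apply_le_sqrt_weightedCost hW r i).trans
      (Real.sqrt_le_sqrt (by have := (hW i).le; gcongr))
  exact ⟨fun i => neg_le_of_abs_le (abs_le_sqrt i), fun i => le_of_abs_le (abs_le_sqrt i)⟩

end WeightedCost

section Radius

theorem dist_le_biSup_dist {α : Type*} [PseudoMetricSpace α] {A : Set α} (hA : IsBounded A) {x : α}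
    (hx : x ∈ A) (c : α) : dist x c ≤ ⨆ z ∈ A, dist z c := by
  obtain ⟨R, hR⟩ := hA.subset_closedBall c
  have bddAbove : BddAbove (Set.range fun z => ⨆ _ : z ∈ A, dist z c) := by
    refine ⟨R, ?_⟩
    rintro _ ⟨z, rfl⟩
    exact Real.iSup_le (fun hz => hR hz) (dist_nonneg.trans (hR hx))
  exact le_ciSup_of_le bddAbove x (by rw [ciSup_pos hx])

theorem dist_le_two_mul_rad {n : ℕ} {A : Set (EuclideanSpace ℝ (Fin n))} (hA : IsBounded A)
    {x z : EuclideanSpace ℝ (Fin n)} (hx : x ∈ A) (hz : z ∈ A) : dist x z ≤ 2 * rad n A := by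
  rw [← div_le_iff₀' two_pos]
  refine le_ciInf fun c => ?_
  linarith [dist_triangle_right x z c, dist_le_biSup_dist hA hx c, dist_le_biSup_dist hA hz c]

end Radius

section Inconsistency

variable {m n q : ℕ} {H : Matrix (Fin m) (Fin n) ℝ} {W : Fin m → ℝ}

theorem dinc_nonneg (hW : ∀ i, 0 < W i) (x : EuclideanSpace ℝ (Fin n)) (y : Fin m → ℝ) :
    0 ≤ dinc m n q H W x y := by
  refine Real.sInf_nonneg ?_
  rintro _ ⟨a, -, rfl⟩
  exact weightedCost_nonneg hW (y - H *ᵥ x + a)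

theorem dinc_le_weightedCost (hW : ∀ i, 0 < W i) (x : EuclideanSpace ℝ (Fin n)) (y : Fin m → ℝ)
    {a : Fin m → ℝ} (ha : (support a).ncard ≤ q) :
    dinc m n q H W x y ≤ weightedCost W (y - H *ᵥ x + a) := by
  refine csInf_le ⟨0, ?_⟩ ⟨a, ha, rfl⟩
  rintro _ ⟨a, -, rfl⟩
  exact weightedCost_nonneg hW (y - H *ᵥ x + a)

theorem exists_weightedCost_lt_of_dinc_lt {x : EuclideanSpace ℝ (Fin n)} {y : Fin m → ℝ} {c : ℝ}
    (hc : dinc m n q H W x y < c) :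
    ∃ a : Fin m → ℝ, (support a).ncard ≤ q ∧ weightedCost W (y - H *ᵥ x + a) < c := by
  obtain ⟨_, ⟨a, ha, rfl⟩, hac⟩ := exists_lt_of_csInf_lt (by exact ⟨_, 0, by simp, rfl⟩) hc
  exact ⟨a, ha, hac⟩

theorem isBounded_sublevel (hW : ∀ i, 0 < W i) (hH : SparseObservable q H) (y : Fin m → ℝ)
    (φ : ℝ) : IsBounded (sublevel m n q H W y φ) := by
  have bounded_states := hH.isBounded_setOf_exists_mulVec_add_mem
    ((isBounded_singleton (x := y)).sub (isBounded_setOf_weightedCost_le hW (φ + 1)))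
  refine ((PiLp.antilipschitzWith_ofLp 2 fun _ : Fin n => ℝ).isBounded_preimage
    bounded_states).subset fun x hx => ?_
  obtain ⟨a, ha, hcost⟩ := exists_weightedCost_lt_of_dinc_lt (lt_add_of_le_of_pos hx one_pos)
  refine ⟨-a, by rwa [support_neg], y, rfl, _, hcost.le, ?_⟩
  dsimp only
  abel

theorem uQty_nonneg (hW : ∀ i, 0 < W i) (y : Fin m → ℝ) (δ : ℝ) : 0 ≤ uQty m n q H W y δ := by
  refine Real.sSup_nonneg ?_
  rintro _ ⟨x, -, rfl⟩
  exact dinc_nonneg hW x y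

theorem uOpt_le_uQty (hW : ∀ i, 0 < W i) (y : Fin m → ℝ) (δ : ℝ) :
    uOpt m n q H W δ ≤ uQty m n q H W y δ :=
  ciInf_le ⟨0, Set.forall_mem_range.2 fun y => uQty_nonneg hW y δ⟩ y

theorem uQty_le_of_two_mul_lt_dist (hW : ∀ i, 0 < W i) (hH : SparseObservable q H)
    {y : Fin m → ℝ} {δ c : ℝ} {x z : EuclideanSpace ℝ (Fin n)} (hx : dinc m n q H W x y ≤ c)
    (hz : dinc m n q H W z y ≤ c) (hδ : 2 * δ < dist x z) : uQty m n q H W y δ ≤ c := by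
  refine Real.sSup_le ?_ ((dinc_nonneg hW x y).trans hx)
  rintro _ ⟨w, hw, rfl⟩
  obtain ⟨φ, ⟨-, hrad⟩, hwφ⟩ := Set.mem_iUnion₂.1 hw
  by_contra! hcw
  have hcφ : c ≤ φ := hcw.le.trans hwφ
  have := dist_le_two_mul_rad (isBounded_sublevel hW hH y φ) (hx.trans hcφ) (hz.trans hcφ)
  linarith

theorem exists_dinc_le_and_dinc_neg_le (hW : ∀ i, 0 < W i) (x : EuclideanSpace ℝ (Fin n))
    {s : Fin m → ℝ} (hs : (support s).ncard ≤ 2 * q) :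
    ∃ y, dinc m n q H W x y ≤ weightedCost W (H *ᵥ x + s) ∧
      dinc m n q H W (-x) y ≤ weightedCost W (H *ᵥ x + s) := by
  obtain ⟨a, b, rfl, ha, hb⟩ := exists_add_eq_of_ncard_support_le (hs.trans_eq (two_mul q))
  refine ⟨b - a, ?_, ?_⟩
  · have residual : b - a - H *ᵥ x + (-2 : ℝ) • b = -(H *ᵥ x + (a + b)) := by module
    rw [← weightedCost_neg, ← residual]
    exact dinc_le_weightedCost hW x _ ((ncard_support_const_smul_le _ b).trans hb)
  · have residual : b - a - H *ᵥ (-x).ofLp + (2 : ℝ) • a = H *ᵥ x + (a + b) := by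
      rw [WithLp.ofLp_neg, mulVec_neg]
      module
    rw [← residual]
    exact dinc_le_weightedCost hW (-x) _ ((ncard_support_const_smul_le _ a).trans ha)

theorem uOpt_le_weightedCost_of_lt_norm (hW : ∀ i, 0 < W i) (hH : SparseObservable q H) {δ : ℝ}
    {x : EuclideanSpace ℝ (Fin n)} (hx : δ < ‖x‖) {s : Fin m → ℝ}
    (hs : (support s).ncard ≤ 2 * q) :
    uOpt m n q H W δ ≤ weightedCost W (H *ᵥ x + s) := by
  obtain ⟨y, hxy, hnxy⟩ := exists_dinc_le_and_dinc_neg_le (H := H) hW x hs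
  have two_mul_lt_dist : 2 * δ < dist x (-x) := by
    rw [dist_eq_norm, sub_neg_eq_add, ← two_smul ℝ x, norm_smul, Real.norm_two]
    gcongr
  exact (uOpt_le_uQty hW y δ).trans (uQty_le_of_two_mul_lt_dist hW hH hxy hnxy two_mul_lt_dist)

theorem uOpt_le_weightedCost_of_le_norm (hW : ∀ i, 0 < W i) (hH : SparseObservable q H) {δ : ℝ}
    {x : EuclideanSpace ℝ (Fin n)} (hx₀ : x ≠ 0) (hx : δ ≤ ‖x‖) {s : Fin m → ℝ}
    (hs : (support s).ncard ≤ 2 * q) :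
    uOpt m n q H W δ ≤ weightedCost W (H *ᵥ x + s) := by
  have scaled {t : ℝ} (ht : 1 < t) :
      uOpt m n q H W δ ≤ t ^ 2 * weightedCost W (H *ᵥ x + s) := by
    have lt_norm : δ < ‖t • x‖ := by
      rw [norm_smul_of_nonneg (by positivity)]
      exact hx.trans_lt (lt_mul_of_one_lt_left (norm_pos_iff.2 hx₀) ht)
    have := uOpt_le_weightedCost_of_lt_norm hW hH lt_norm
      ((ncard_support_const_smul_le t s).trans hs)
    rwa [WithLp.ofLp_smul, mulVec_smul, ← smul_add, weightedCost_smul] at this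
  have tendsto_cost : Tendsto (fun t : ℝ => t ^ 2 * weightedCost W (H *ᵥ x + s)) (𝓝[>] 1)
      (𝓝 (weightedCost W (H *ᵥ x + s))) :=
    tendsto_nhdsWithin_of_tendsto_nhds (Continuous.tendsto' (by fun_prop) _ _ (by simp))
  exact ge_of_tendsto tendsto_cost (eventually_mem_nhdsWithin.mono fun _ => scaled)

end Inconsistency

theorem stmt_8_general {m n q : ℕ} (hn : 1 ≤ n) {H : Matrix (Fin m) (Fin n) ℝ} {W : Fin m → ℝ}
    (hW : ∀ i, 0 < W i) (hH : SparseObservable q H) {δ : ℝ} (hδ : 0 < δ) :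
    uOpt m n q H W δ ≤ uBar m n q H W δ := by
  have : Nonempty (Fin n) := ⟨⟨0, hn⟩⟩
  obtain ⟨x, hx⟩ := exists_norm_eq (EuclideanSpace ℝ (Fin n)) hδ.le
  refine le_csInf ⟨_, x, 0, hx, by simp, rfl⟩ ?_
  rintro _ ⟨x, s, rfl, hs, rfl⟩
  exact uOpt_le_weightedCost_of_le_norm hW hH (norm_pos_iff.1 hδ) le_rfl hs

/-- under `2q`-observability, `u(δ) ≤ ū(δ)` for every `δ > 0`. -/
theorem stmt_8 (m n q : ℕ) (hm : 1 ≤ m) (hn : 1 ≤ n) (hq : q ≤ m)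
    (H : Matrix (Fin m) (Fin n) ℝ) (W : Fin m → ℝ) (hW : ∀ i, 0 < W i)
    (hobs : TwoQObservable m n q H) :
    ∀ δ : ℝ, 0 < δ → uOpt m n q H W δ ≤ uBar m n q H W δ := by
  intro δ hδ
  exact stmt_8_general hn hW (hobs.sparseObservable.mono (by omega)) hδ
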